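/- The step-indexed logical relation for the fine-grain call-by-value combinatory logic xCL_fg is sound for the contextual preorder: for all terms p,q of the same sort, if L(p,q) then p ≲ctx q. -/

import Mathlib

namespace FG

mutual
/-- Values of the fine-grain call-by-value combinatory logic xCL_fg. -/
inductive V : Type
  | I : V
  | K : V
  | S : V
  | K1 (t : C) : V
  | S1 (t : C) : V
  | S2 (s t : C) : V
/-- Computations of xCL_fg. -/
inductive C : Type
  | ret (v : V) : C            -- [v]
  | bull (t s : C) : C         -- t • s
  | rtri (v : V) (s : C) : C   -- v ▷ s
  | ltri (t : C) (v : V) : C   -- t ◁ v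
  | circ (v w : V) : C         -- v ∘ w
end

/-- Labeled transitions `v —u→ t` from values to computations (`LStep v u t`). -/
inductive LStep : V → V → C → Prop
  | S (v : V) : LStep .S v (.ret (.S1 (.ret v)))
  | S1 (t : C) (v : V) : LStep (.S1 t) v (.ret (.S2 t (.ret v)))
  | S2 (t s : C) (v : V) : LStep (.S2 t s) v (.bull (.ltri t v) (.ltri s v))
  | K (v : V) : LStep .K v (.ret (.K1 (.ret v)))
  | K1 (t : C) (v : V) : LStep (.K1 t) v t
  | I (v : V) : LStep .I v (.ret v)

/-- Unlabeled transitions from computations to values: `t → v`. -/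
inductive StepV : C → V → Prop
  | ret (v : V) : StepV (.ret v) v

/-- Unlabeled transitions from computations to computations: `t → t'`. -/
inductive StepC : C → C → Prop
  | bullL {t t' : C} (s : C) : StepC t t' → StepC (.bull t s) (.bull t' s)
  | bullV {t : C} {v : V} (s : C) : StepV t v → StepC (.bull t s) (.rtri v s)
  | ltriL {t t' : C} (v : V) : StepC t t' → StepC (.ltri t v) (.ltri t' v)
  | ltriV {t : C} {v : V} (w : V) : StepV t v → StepC (.ltri t w) (.circ v w)
  | rtriR {s s' : C} (v : V) : StepC s s' → StepC (.rtri v s) (.rtri v s')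
  | rtriV {s : C} {w : V} (v : V) : StepV s w → StepC (.rtri v s) (.circ v w)
  | circ {v w : V} {t : C} : LStep v w t → StepC (.circ v w) t

/-- `t ⇒ t'` between computations. -/
def StepsC : C → C → Prop := Relation.ReflTransGen StepC

/-- `t ⇒ v`: `t` reduces in finitely many steps to the value `v`. -/
def StepsV (t : C) (v : V) : Prop := ∃ t', StepsC t t' ∧ StepV t' v

/-- `t⇓`: the computation `t` reduces to some value. -/
def ConvC (t : C) : Prop := ∃ v, StepsV t v

/-- Applicative simulations for xCL_fg. -/
def IsSim (RV : V → V → Prop) (RC : C → C → Prop) : Prop :=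
  (∀ v w, RV v w → ∀ u t, LStep v u t → ∃ s, LStep w u s ∧ RC t s) ∧
  (∀ t s, RC t s →
    (∀ v, StepV t v → ∃ w, StepsV s w ∧ RV v w) ∧
    (∀ t', StepC t t' → ∃ s', StepsC s s' ∧ RC t' s'))

/-- Applicative similarity on values. -/
def AppSimV (v w : V) : Prop := ∃ RV RC, IsSim RV RC ∧ RV v w

/-- Applicative similarity on computations. -/
def AppSimC (t s : C) : Prop := ∃ RV RC, IsSim RV RC ∧ RC t s

/-- A sorted relation is a congruence if it is compatible with all operators of both sorts. -/
def IsCong (RV : V → V → Prop) (RC : C → C → Prop) : Prop :=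
  RV .S .S ∧ RV .K .K ∧ RV .I .I ∧
  (∀ t s, RC t s → RV (.K1 t) (.K1 s)) ∧
  (∀ t s, RC t s → RV (.S1 t) (.S1 s)) ∧
  (∀ t s t' s', RC t s → RC t' s' → RV (.S2 t t') (.S2 s s')) ∧
  (∀ v w, RV v w → RC (.ret v) (.ret w)) ∧
  (∀ t s t' s', RC t s → RC t' s' → RC (.bull t t') (.bull s s')) ∧
  (∀ v w t s, RV v w → RC t s → RC (.rtri v t) (.rtri w s)) ∧
  (∀ v w t s, RV v w → RC t s → RC (.ltri t v) (.ltri s w)) ∧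
  (∀ v w v' w', RV v w → RV v' w' → RC (.circ v v') (.circ w w'))

/-- Containment in the preorder `O` (the value component of `O` is total). -/
def SubO (RV : V → V → Prop) (RC : C → C → Prop) : Prop :=
  (∀ v w, RV v w → True) ∧ (∀ t s, RC t s → ConvC t → ConvC s)

/-- The contextual preorder (value sort): the greatest congruence contained in `O`. -/
def CtxLeV (v w : V) : Prop := ∃ RV RC, IsCong RV RC ∧ SubO RV RC ∧ RV v w

/-- The contextual preorder (computation sort). -/
def CtxLeC (t s : C) : Prop := ∃ RV RC, IsCong RV RC ∧ SubO RV RC ∧ RC t s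

/-- The step-indexed approximations `Lⁿ = (Lⁿ_v, Lⁿ_c)`. -/
def LrelN : ℕ → (V → V → Prop) × (C → C → Prop)
  | 0 => (fun _ _ => True, fun _ _ => True)
  | n+1 =>
    ( fun v w => ∀ u z, (LrelN n).1 u z → ∀ t, LStep v u t →
        ∃ s, LStep w z s ∧ (LrelN n).2 t s,
      fun t s =>
        (∀ v, StepV t v → ∃ w, StepsV s w ∧ (LrelN n).1 v w) ∧
        (∀ t', StepC t t' → ∃ s', StepsC s s' ∧ (LrelN n).2 t' s') )

/-- The step-indexed logical relation, value sort: `L_v = ⋂ₙ Lⁿ_v`. -/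
def LV (v w : V) : Prop := ∀ n, (LrelN n).1 v w

/-- The step-indexed logical relation, computation sort: `L_c = ⋂ₙ Lⁿ_c`. -/
def LC (t s : C) : Prop := ∀ n, (LrelN n).2 t s

end FG

/-!
The relations `Lⁿ` are not downward closed in `n`, so that `L` is neither visibly reflexive nor
visibly a congruence. The variant `MonoRel` that relates values only if they are related at all
smaller indices is a congruence contained in `O`, and soundness amounts to `L ⊆ ⋂ₙ MonoRel n`. To
prove this by induction on the index, one has to apply the hypothesis `L(v, w)` to arguments that
are merely related to themselves by `MonoRel`. This succeeds because every value `z` has a slow copy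
`z'`, which is above `z` for `MonoRel` and below `z` for `L`: slowness helps on the left of `L`,
where each step lowers the index, and is invisible to `MonoRel` on the right.

Values with slow copies are closed under application, so slow copies of `I`, `K` and `S` suffice.
They are built from a recursive program `adj σ ρ x`, which wraps `x` in delays so that its index in
`L` is shifted by the difference of the running times of the clocks `ρ` and `σ`.
-/

namespace FG

open Computation (think thinkN Results)
open Function (update update_self update_of_ne)

/-! ### Evaluation in the delay monad -/

/-- The unique computation that the value `v` moves to under the label `u`. -/
def ap : V → V → C
  | .I, u => .ret u
  | .K, u => .ret (.K1 (.ret u))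
  | .S, u => .ret (.S1 (.ret u))
  | .K1 t, _ => t
  | .S1 t, u => .ret (.S2 t (.ret u))
  | .S2 t s, u => .bull (.ltri t u) (.ltri s u)

section

variable (t s : C) (u : V)

theorem ap_I : ap .I u = .ret u := rfl

theorem ap_K : ap .K u = .ret (.K1 (.ret u)) := rfl

theorem ap_S : ap .S u = .ret (.S1 (.ret u)) := rfl

theorem ap_K1 : ap (.K1 t) u = t := rfl

theorem ap_S1 : ap (.S1 t) u = .ret (.S2 t (.ret u)) := rfl

theorem ap_S2 : ap (.S2 t s) u = .bull (.ltri t u) (.ltri s u) := rfl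

end

theorem lStep_iff {v u : V} {t : C} : LStep v u t ↔ t = ap v u := by
  constructor
  · rintro ⟨⟩ <;> rfl
  · rintro rfl
    cases v <;> constructor

/-- The unlabeled transitions, which are deterministic and total, as a function. -/
def step : C → V ⊕ C
  | .ret v => .inl v
  | .bull t s => .inr ((step t).elim (.rtri · s) (.bull · s))
  | .rtri v s => .inr ((step s).elim (.circ v) (.rtri v))
  | .ltri t w => .inr ((step t).elim (.circ · w) (.ltri · w))
  | .circ v w => .inr (ap v w)

theorem stepV_iff {t : C} {v : V} : StepV t v ↔ step t = .inl v := by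
  constructor
  · rintro ⟨⟩
    rfl
  · cases t <;> simp only [step, Sum.inl.injEq, reduceCtorEq, false_implies]
    rintro rfl
    exact .ret _

theorem StepC.step_eq {t t' : C} (h : StepC t t') : step t = .inr t' := by
  induction h with
  | circ h => simp [step, lStep_iff.1 h]
  | bullL _ _ ih | ltriL _ _ ih | rtriR _ _ ih => simp [step, ih]
  | bullV _ h | ltriV _ h | rtriV _ h => simp [step, stepV_iff.1 h]

theorem stepC_of_step : ∀ {t t' : C}, step t = .inr t' → StepC t t'
  | .circ _ _, _, rfl => .circ (lStep_iff.2 rfl)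
  | .bull t s, _, rfl => by
    cases h : step t with
    | inl v => exact .bullV s (stepV_iff.2 h)
    | inr t' => exact .bullL s (stepC_of_step h)
  | .ltri t w, _, rfl => by
    cases h : step t with
    | inl v => exact .ltriV w (stepV_iff.2 h)
    | inr t' => exact .ltriL w (stepC_of_step h)
  | .rtri v s, _, rfl => by
    cases h : step s with
    | inl w => exact .rtriV v (stepV_iff.2 h)
    | inr s' => exact .rtriR v (stepC_of_step h)

theorem stepC_iff {t t' : C} : StepC t t' ↔ step t = .inr t' :=
  ⟨StepC.step_eq, stepC_of_step⟩

/-- The timed evaluation of a computation: one `think` for each transition between computations. -/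
def eval (t : C) : Computation V := Computation.corec step t

theorem eval_of_step_inl {t : C} {v : V} (h : step t = .inl v) : eval t = pure v :=
  Computation.destruct_eq_pure (by rw [eval, Computation.corec_eq, h]; rfl)

theorem eval_of_step_inr {t t' : C} (h : step t = .inr t') : eval t = think (eval t') :=
  Computation.destruct_eq_think (by rw [eval, Computation.corec_eq, h]; rfl)

theorem StepsC.mem_eval {t t' : C} {v : V} (h : StepsC t t') (hv : v ∈ eval t') : v ∈ eval t := by
  induction h using Relation.ReflTransGen.head_induction_on with
  | refl => exact hv
  | head h _ ih => exact eval_of_step_inr h.step_eq ▸ Computation.think_mem ih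

theorem stepsV_of_results {t : C} {v : V} {n : ℕ} (h : Results (eval t) v n) : StepsV t v := by
  induction n generalizing t with
  | zero =>
    cases ht : step t with
    | inl w =>
      rw [eval_of_step_inl ht] at h
      cases Computation.eq_of_pure_mem h.mem
      exact ⟨t, .refl, stepV_iff.2 ht⟩
    | inr t' =>
      rw [eval_of_step_inr ht] at h
      obtain ⟨_, _, hn⟩ := Computation.of_results_think h
      cases hn
  | succ n ih =>
    cases ht : step t with
    | inl w =>
      rw [eval_of_step_inl ht] at h
      cases h.len_unique (Computation.results_pure w)
    | inr t' =>
      rw [eval_of_step_inr ht, Computation.results_think_iff] at h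
      obtain ⟨r, hr, hv⟩ := ih h
      exact ⟨r, .head (stepC_of_step ht) hr, hv⟩

theorem stepsV_iff {t : C} {v : V} : StepsV t v ↔ v ∈ eval t := by
  constructor
  · rintro ⟨t', ht, hv⟩
    exact StepsC.mem_eval ht (eval_of_step_inl (stepV_iff.1 hv) ▸ Computation.ret_mem v)
  · intro h
    obtain ⟨n, hn⟩ := Computation.exists_results_of_mem h
    exact stepsV_of_results hn

section Delay

variable {α β : Type}

theorem eq_of_think_bisim {ι : Type} {x y : ι → Computation α}
    (h : ∀ i, x i = y i ∨ ∃ j, x i = think (x j) ∧ y i = think (y j)) (i : ι) : x i = y i := by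
  refine Computation.eq_of_bisim (fun a b => a = b ∨ ∃ i, a = x i ∧ b = y i) ?_ (.inr ⟨i, rfl, rfl⟩)
  have refl (a : Computation α) :
      Computation.BisimO (fun a b => a = b ∨ ∃ i, a = x i ∧ b = y i) a.destruct a.destruct := by
    cases a.destruct with
    | inl _ => rfl
    | inr _ => exact .inl rfl
  rintro a _ (rfl | ⟨i, rfl, rfl⟩)
  · exact refl a
  · obtain hi | ⟨j, hx, hy⟩ := h i
    · exact hi ▸ refl _
    · rw [hx, hy, Computation.destruct_think, Computation.destruct_think]
      exact .inr ⟨j, rfl, rfl⟩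

variable (c : Computation α) (g : α → Computation β) (m n : ℕ)

theorem think_bind : think c >>= g = think (c >>= g) := Computation.think_bind c g

theorem bind_think : (c >>= fun a => think (g a)) = think (c >>= g) :=
  eq_of_think_bisim (x := fun c => c >>= fun a => think (g a)) (y := fun c => think (c >>= g))
    (fun c => by
      induction c using Computation.recOn with
      | pure a => exact .inl ((pure_bind a _).trans (congrArg think (pure_bind a g).symm))
      | think c => exact .inr ⟨c, think_bind _ _, congrArg think (think_bind _ _)⟩) c

theorem thinkN_zero : thinkN c 0 = c := rfl

theorem thinkN_thinkN : thinkN (thinkN c m) n = thinkN c (m + n) := by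
  induction n with
  | zero => rfl
  | succ n ih => exact congrArg think ih

theorem thinkN_bind : thinkN c n >>= g = thinkN (c >>= g) n := by
  induction n with
  | zero => rfl
  | succ n ih => exact (think_bind _ g).trans (congrArg think ih)

theorem bind_thinkN : (c >>= fun a => thinkN (g a) n) = thinkN (c >>= g) n := by
  induction n with
  | zero => rfl
  | succ n ih => exact (bind_think c _).trans (congrArg think ih)

end Delay

theorem eval_frame {F : C → C} {f : V → C}
    (hF : ∀ t, step (F t) = .inr ((step t).elim f F)) (t : C) :
    eval (F t) = thinkN (eval t >>= fun v => eval (f v)) 1 := by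
  refine eq_of_think_bisim (x := fun t => eval (F t)) (y := fun t => think (eval t >>= _))
    (fun t => ?_) t
  simp only [eval_of_step_inr (hF t)]
  cases ht : step t with
  | inl v => exact .inl (congrArg think (by rw [eval_of_step_inl ht, pure_bind]; rfl))
  | inr t' => exact .inr ⟨t', rfl, by rw [eval_of_step_inr ht, think_bind]⟩

theorem eval_ret (v : V) : eval (.ret v) = pure v := eval_of_step_inl rfl

theorem eval_circ (v w : V) : eval (.circ v w) = thinkN (eval (ap v w)) 1 := eval_of_step_inr rfl

theorem eval_rtri (v : V) (s : C) :
    eval (.rtri v s) = thinkN (eval s >>= fun w => eval (ap v w)) 2 := by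
  simp only [eval_frame (F := .rtri v) (f := .circ v) (fun _ => rfl), eval_circ, bind_thinkN,
    thinkN_thinkN]

theorem eval_ltri (t : C) (w : V) :
    eval (.ltri t w) = thinkN (eval t >>= fun v => eval (ap v w)) 2 := by
  simp only [eval_frame (F := (.ltri · w)) (f := (.circ · w)) (fun _ => rfl), eval_circ,
    bind_thinkN, thinkN_thinkN]

theorem eval_bull (t s : C) :
    eval (.bull t s) = thinkN (eval t >>= fun v => eval s >>= fun w => eval (ap v w)) 3 := by
  simp only [eval_frame (F := (.bull · s)) (f := (.rtri · s)) (fun _ => rfl), eval_rtri,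
    bind_thinkN, thinkN_thinkN]

section StepLift

variable {α β γ : Type}

/-- The lifting of an indexed relation to delayed results: a result of `x` found after `j` steps,
`j < n`, is matched by a result of `y`, however late, at the remaining index `n - 1 - j`. -/
def StepLift (R : ℕ → α → β → Prop) (n : ℕ) (x : Computation α) (y : Computation β) : Prop :=
  ∀ ⦃a j⦄, Results x a j → ∀ ⦃k⦄, n = j + k + 1 → ∃ b ∈ y, R k a b

variable {R : ℕ → α → β → Prop} {x : Computation α} {y : Computation β} {k m n : ℕ}

theorem stepLift_zero : StepLift R 0 x y := fun _ _ _ _ h => by omega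

theorem stepLift_pure {a : α} {b : β} (h : ∀ k, n = k + 1 → R k a b) :
    StepLift R n (pure a) (pure b) := by
  rintro a' j ha k rfl
  cases Computation.eq_of_pure_mem ha.mem
  cases ha.len_unique (Computation.results_pure a)
  exact ⟨b, Computation.ret_mem b, h _ (by omega)⟩

theorem stepLift_succ_think : StepLift R (n + 1) (think x) y ↔ StepLift R n x y := by
  constructor
  · rintro h a j ha k rfl
    exact h (Computation.results_think ha) (by omega)
  · intro h a j ha k hk
    obtain ⟨j, ha', rfl⟩ := Computation.of_results_think ha
    exact h ha' (by omega)

theorem stepLift_thinkN_left (h : ∀ m, n = m + k → StepLift R m x y) :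
    StepLift R n (thinkN x k) y := by
  induction k generalizing n with
  | zero => exact h n rfl
  | succ k ih =>
    cases n with
    | zero => exact stepLift_zero
    | succ n => exact stepLift_succ_think.2 (ih fun m hm => h m (by omega))

theorem stepLift_thinkN {i : ℕ} (h : ∀ m, n = m + k → StepLift R m x y) :
    StepLift R n (thinkN x k) (thinkN y i) := fun _ _ ha _ hl =>
  (stepLift_thinkN_left h ha hl).imp fun _ hb => ⟨(Computation.thinkN_mem i).2 hb.1, hb.2⟩

theorem StepLift.bind {α' β' : Type} {R' : ℕ → α' → β' → Prop} {f : α → Computation α'}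
    {g : β → Computation β'} (hx : StepLift R m x y) (hnm : n ≤ m)
    (hfg : ∀ ⦃a b j k l⦄, Results x a j → b ∈ y → R k a b → m = j + k + 1 → n = j + l →
      StepLift R' l (f a) (g b)) :
    StepLift R' n (x >>= f) (y >>= g) := by
  rintro a' _ ha' k rfl
  obtain ⟨a, i, j, ha, haa', rfl⟩ := Computation.of_results_bind ha'
  obtain ⟨b, hb, hab⟩ := hx ha (k := m - i - 1) (by omega)
  obtain ⟨b', hb', hab'⟩ := hfg ha hb hab (l := j + k + 1) (by omega) (by omega) haa' rfl
  exact ⟨b', Computation.mem_bind hb hb', hab'⟩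

theorem StepLift.bind_pure_left {R' : ℕ → γ → β → Prop} {f : α → γ} (hx : StepLift R m x y)
    (hnm : n ≤ m)
    (hf : ∀ ⦃a b j k l⦄, R k a b → m = j + k + 1 → n = j + l + 1 → R' l (f a) b) :
    StepLift R' n (x >>= fun a => pure (f a)) y := by
  rw [← bind_pure y]
  exact hx.bind hnm fun _ _ _ _ _ _ _ hab hk hl =>
    stepLift_pure fun l' hl' => hf hab hk (by omega)

theorem StepLift.comp {P : β → γ → Prop} {T : ℕ → α → γ → Prop} {z : Computation γ}
    (hxy : StepLift R n x y) (hyz : ∀ b ∈ y, ∃ c ∈ z, P b c)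
    (hT : ∀ ⦃k a b c⦄, k < n → R k a b → P b c → T k a c) : StepLift T n x z := by
  intro a j ha k hk
  obtain ⟨b, hb, hab⟩ := hxy ha hk
  obtain ⟨c, hc, hbc⟩ := hyz b hb
  exact ⟨c, hc, hT (by omega) hab hbc⟩

theorem StepLift.mono (h : StepLift R n x y) (hR : ∀ {k l a b}, R k a b → l ≤ k → R l a b)
    (hm : m ≤ n) : StepLift R m x y := fun _ j ha k _ =>
  (h ha (k := n - j - 1) (by omega)).imp fun _ hb => ⟨hb.1, hR hb.2 (by omega)⟩

theorem stepLift_forall_iff :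
    (∀ n, StepLift R n x y) ↔ ∀ a ∈ x, ∃ b ∈ y, ∀ k, R k a b := by
  constructor
  · intro h a ha
    obtain ⟨j, hj⟩ := Computation.exists_results_of_mem ha
    obtain ⟨b, hb, -⟩ := h (j + 1) hj (k := 0) rfl
    refine ⟨b, hb, fun k => ?_⟩
    obtain ⟨b', hb', hab'⟩ := h (j + k + 1) hj rfl
    exact Computation.mem_unique hb hb' ▸ hab'
  · rintro h n a j ha k -
    obtain ⟨b, hb, hab⟩ := h a ha.mem
    exact ⟨b, hb, hab k⟩

end StepLift

/-- The value component of `LrelN`. -/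
def LogRel (n : ℕ) (v w : V) : Prop := (LrelN n).1 v w

theorem lrelN_comp_iff {n : ℕ} {t s : C} :
    (LrelN n).2 t s ↔ StepLift LogRel n (eval t) (eval s) := by
  induction n generalizing t s with
  | zero => exact iff_of_true trivial stepLift_zero
  | succ n ih =>
    simp only [LrelN, stepV_iff, stepC_iff, stepsV_iff, ih]
    cases ht : step t with
    | inl v =>
      simp only [eval_of_step_inl ht, Sum.inl.injEq, reduceCtorEq, false_implies, implies_true,
        and_true, forall_eq']
      constructor
      · rintro ⟨w, hw, hvw⟩ v' j hv k hk
        cases Computation.eq_of_pure_mem hv.mem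
        cases hv.len_unique (Computation.results_pure v)
        obtain rfl : n = k := by omega
        exact ⟨w, hw, hvw⟩
      · exact fun h => h (Computation.results_pure v) (by omega)
    | inr t' =>
      simp only [eval_of_step_inr ht, stepLift_succ_think, Sum.inr.injEq, reduceCtorEq,
        false_implies, implies_true, true_and, forall_eq']
      constructor
      · rintro ⟨s', hs, h⟩ v j hv k hk
        obtain ⟨w, hw, hvw⟩ := h hv hk
        exact ⟨w, hs.mem_eval hw, hvw⟩
      · exact fun h => ⟨s, .refl, h⟩

theorem logRel_succ_iff {n : ℕ} {v w : V} :
    LogRel (n + 1) v w ↔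
      ∀ u z, LogRel n u z → StepLift LogRel n (eval (ap v u)) (eval (ap w z)) := by
  simp only [LogRel, LrelN, lStep_iff, forall_eq, exists_eq_left, lrelN_comp_iff]

theorem logRel_forall_ap {v w u z : V} (hvw : ∀ n, LogRel n v w) (huz : ∀ n, LogRel n u z) :
    ∀ r ∈ eval (ap v u), ∃ r' ∈ eval (ap w z), ∀ n, LogRel n r r' :=
  stepLift_forall_iff.1 fun n => logRel_succ_iff.1 (hvw (n + 1)) u z (huz n)

/-! ### The downward closed logical relation -/

/-- The variant of `LogRel` that relates values at index `n` only if they are related at every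
smaller index. Unlike `LogRel` it is downward closed, hence reflexive and a congruence. The body is
`monoRel_iff` with `StepLift` unfolded, as the termination checker needs to see the indices. -/
def MonoRel (n : ℕ) (v w : V) : Prop :=
  ∀ m, m < n → ∀ u z, MonoRel m u z → ∀ r j, Results (eval (ap v u)) r j → ∀ k, m = j + k + 1 →
    ∃ r' ∈ eval (ap w z), MonoRel k r r'
termination_by n

theorem monoRel_iff {n : ℕ} {v w : V} :
    MonoRel n v w ↔
      ∀ m < n, ∀ u z, MonoRel m u z → StepLift MonoRel m (eval (ap v u)) (eval (ap w z)) := by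
  rw [MonoRel]
  rfl

section

variable {m n : ℕ} {v w v' w' u z : V} {t s t' s' : C}

theorem MonoRel.mono (h : MonoRel n v w) (hm : m ≤ n) : MonoRel m v w :=
  monoRel_iff.2 fun k hk => monoRel_iff.1 h k (by omega)

theorem MonoRel.ap (h : MonoRel n v w) (hm : m < n) (h' : MonoRel m u z) :
    StepLift MonoRel m (eval (ap v u)) (eval (ap w z)) :=
  monoRel_iff.1 h m hm u z h'

theorem stepLift_ret (h : MonoRel n v w) : StepLift MonoRel n (eval (.ret v)) (eval (.ret w)) := by
  rw [eval_ret, eval_ret]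
  exact stepLift_pure fun k hk => h.mono (by omega)

theorem stepLift_circ (h : MonoRel n v w) (h' : MonoRel n v' w') :
    StepLift MonoRel n (eval (.circ v v')) (eval (.circ w w')) := by
  rw [eval_circ, eval_circ]
  exact stepLift_thinkN fun m hm => h.ap (by omega) (h'.mono (by omega))

theorem stepLift_rtri (h : MonoRel n v w) (h' : StepLift MonoRel n (eval t) (eval s)) :
    StepLift MonoRel n (eval (.rtri v t)) (eval (.rtri w s)) := by
  rw [eval_rtri, eval_rtri]
  exact stepLift_thinkN fun m hm => h'.bind (by omega) fun _ _ j k l _ _ hk hj hl =>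
    h.ap (by omega) (hk.mono (by omega))

theorem stepLift_ltri (h : StepLift MonoRel n (eval t) (eval s)) (h' : MonoRel n v w) :
    StepLift MonoRel n (eval (.ltri t v)) (eval (.ltri s w)) := by
  rw [eval_ltri, eval_ltri]
  exact stepLift_thinkN fun m hm => h.bind (by omega) fun _ _ j k l _ _ hk hj hl =>
    hk.ap (by omega) (h'.mono (by omega))

theorem stepLift_bull (h : StepLift MonoRel n (eval t) (eval s))
    (h' : StepLift MonoRel n (eval t') (eval s')) :
    StepLift MonoRel n (eval (.bull t t')) (eval (.bull s s')) := by
  rw [eval_bull, eval_bull]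
  exact stepLift_thinkN fun m hm => h.bind (by omega) fun _ _ i k l _ _ hk hi hl =>
    (h'.mono MonoRel.mono (m := n - i) (by omega)).bind (by omega)
      fun _ _ j k' l' _ _ hk' hj hl' => hk.ap (by omega) (hk'.mono (by omega))

theorem monoRel_I (n : ℕ) : MonoRel n .I .I :=
  monoRel_iff.2 fun _ _ _ _ h => stepLift_ret h

theorem monoRel_K1 (h : StepLift MonoRel n (eval t) (eval s)) : MonoRel n (.K1 t) (.K1 s) :=
  monoRel_iff.2 fun _ hm _ _ _ => h.mono MonoRel.mono hm.le

theorem monoRel_K (n : ℕ) : MonoRel n .K .K :=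
  monoRel_iff.2 fun _ _ _ _ h => stepLift_ret (monoRel_K1 (stepLift_ret h))

theorem monoRel_S2 (h : StepLift MonoRel n (eval t) (eval s))
    (h' : StepLift MonoRel n (eval t') (eval s')) :
    MonoRel n (.S2 t t') (.S2 s s') :=
  monoRel_iff.2 fun _ hm _ _ hu =>
    stepLift_bull (stepLift_ltri (h.mono MonoRel.mono hm.le) hu)
      (stepLift_ltri (h'.mono MonoRel.mono hm.le) hu)

theorem monoRel_S1 (h : StepLift MonoRel n (eval t) (eval s)) : MonoRel n (.S1 t) (.S1 s) :=
  monoRel_iff.2 fun _ hm _ _ hu =>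
    stepLift_ret (monoRel_S2 (h.mono MonoRel.mono hm.le) (stepLift_ret hu))

theorem monoRel_S (n : ℕ) : MonoRel n .S .S :=
  monoRel_iff.2 fun _ _ _ _ h => stepLift_ret (monoRel_S1 (stepLift_ret h))

mutual

theorem monoRel_refl (n : ℕ) : ∀ v : V, MonoRel n v v
  | .I => monoRel_I n
  | .K => monoRel_K n
  | .S => monoRel_S n
  | .K1 t => monoRel_K1 (stepLift_monoRel_refl n t)
  | .S1 t => monoRel_S1 (stepLift_monoRel_refl n t)
  | .S2 t s => monoRel_S2 (stepLift_monoRel_refl n t) (stepLift_monoRel_refl n s)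

theorem stepLift_monoRel_refl (n : ℕ) : ∀ t : C, StepLift MonoRel n (eval t) (eval t)
  | .ret v => stepLift_ret (monoRel_refl n v)
  | .bull t s => stepLift_bull (stepLift_monoRel_refl n t) (stepLift_monoRel_refl n s)
  | .rtri v s => stepLift_rtri (monoRel_refl n v) (stepLift_monoRel_refl n s)
  | .ltri t v => stepLift_ltri (stepLift_monoRel_refl n t) (monoRel_refl n v)
  | .circ v w => stepLift_circ (monoRel_refl n v) (monoRel_refl n w)

end

/-- The intersection of the relations `MonoRel n`. -/
def LeV (v w : V) : Prop := ∀ n, MonoRel n v w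

/-- The lifting of `LeV` to delayed values. -/
def LeC (x y : Computation V) : Prop := ∀ v ∈ x, ∃ w ∈ y, LeV v w

theorem leC_iff {x y : Computation V} : LeC x y ↔ ∀ n, StepLift MonoRel n x y :=
  stepLift_forall_iff.symm

theorem isCong_leV_leC : IsCong LeV (fun t s => LeC (eval t) (eval s)) := by
  simp only [leC_iff]
  exact ⟨monoRel_S, monoRel_K, monoRel_I,
    fun _ _ h n => monoRel_K1 (h n),
    fun _ _ h n => monoRel_S1 (h n),
    fun _ _ _ _ h h' n => monoRel_S2 (h n) (h' n),
    fun _ _ h n => stepLift_ret (h n),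
    fun _ _ _ _ h h' n => stepLift_bull (h n) (h' n),
    fun _ _ _ _ h h' n => stepLift_rtri (h n) (h' n),
    fun _ _ _ _ h h' n => stepLift_ltri (h' n) (h n),
    fun _ _ _ _ h h' n => stepLift_circ (h n) (h' n)⟩

theorem subO_leV_leC : SubO LeV (fun t s => LeC (eval t) (eval s)) := by
  refine ⟨fun _ _ _ => trivial, ?_⟩
  rintro t s h ⟨v, hv⟩
  obtain ⟨w, hw, -⟩ := h v (stepsV_iff.1 hv)
  exact ⟨w, stepsV_iff.2 hw⟩

theorem LeV.ctxLeV (h : LeV v w) : CtxLeV v w :=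
  ⟨_, _, isCong_leV_leC, subO_leV_leC, h⟩

theorem LeC.ctxLeC (h : LeC (eval t) (eval s)) : CtxLeC t s :=
  ⟨_, _, isCong_leV_leC, subO_leV_leC, h⟩

theorem LeV.refl (v : V) : LeV v v := fun n => monoRel_refl n v

theorem LeV.ap (h : LeV v w) (h' : LeV u z) : LeC (eval (ap v u)) (eval (ap w z)) :=
  leC_iff.2 fun n => (h (n + 1)).ap n.lt_succ_self (h' n)

theorem MonoRel.trans_leV {a b c : V} (hab : MonoRel n a b) (hbc : LeV b c) : MonoRel n a c := by
  induction n using Nat.strong_induction_on generalizing a b c with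
  | _ n ih =>
    exact monoRel_iff.2 fun m hm u z huz => (hab.ap hm huz).comp (hbc.ap (.refl z))
      fun k _ _ _ hk => ih k (by omega)

theorem LeV.trans {a b c : V} (hab : LeV a b) (hbc : LeV b c) : LeV a c :=
  fun n => (hab n).trans_leV hbc

theorem leV_ext (h : ∀ u, LeC (eval (ap v u)) (eval (ap w u))) : LeV v w := fun n =>
  monoRel_iff.2 fun _ hm _ z huz => ((monoRel_refl n v).ap hm huz).comp (h z)
    fun _ _ _ _ _ => MonoRel.trans_leV

theorem leC_pure (h : LeV v w) : LeC (pure v) (pure w) := fun _ hr =>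
  ⟨w, Computation.ret_mem w, Computation.eq_of_pure_mem hr ▸ h⟩

theorem LeC.bind {x y : Computation V} {f g : V → Computation V} (hxy : LeC x y)
    (hfg : ∀ v w, v ∈ x → w ∈ y → LeV v w → LeC (f v) (g w)) : LeC (x >>= f) (y >>= g) := by
  intro r hr
  obtain ⟨v, hv, hvr⟩ := Computation.exists_of_mem_bind hr
  obtain ⟨w, hw, hvw⟩ := hxy v hv
  obtain ⟨q, hq, hrq⟩ := hfg v w hv hw hvw r hvr
  exact ⟨q, Computation.mem_bind hw hq, hrq⟩

theorem leC_thinkN {x y : Computation V} {i j : ℕ} :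
    LeC (thinkN x i) (thinkN y j) ↔ LeC x y := by
  simp only [LeC, Computation.thinkN_mem]

theorem LeC.thinkN_right {x y : Computation V} (h : LeC x y) (n : ℕ) : LeC x (thinkN y n) :=
  leC_thinkN (i := 0).2 h

theorem LogRel.trans_leV {a b c : V} (hab : LogRel n a b) (hbc : LeV b c) : LogRel n a c := by
  induction n using Nat.strong_induction_on generalizing a b c with
  | _ n ih =>
    cases n with
    | zero => trivial
    | succ n =>
      exact logRel_succ_iff.2 fun u z huz => (logRel_succ_iff.1 hab u z huz).comp (hbc.ap (.refl z))
        fun k _ _ _ hk => ih k (by omega)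

end

/-! ### Bracket abstraction -/

/-- Applicative expressions over the variables `X`, from which combinators are built by bracket
abstraction. -/
inductive Expr (X : Type) : Type
  | var (x : X) : Expr X
  | con (v : V) : Expr X
  | app (P Q : Expr X) : Expr X

namespace Expr

variable {X : Type}

/-- The computation denoted by an expression in an environment. -/
def subst (ρ : X → V) : Expr X → C
  | var x => .ret (ρ x)
  | con v => .ret v
  | app P Q => .bull (P.subst ρ) (Q.subst ρ)

/-- The number of steps spent on distributing the argument of an abstraction with body `P`. -/
def callCost : Expr X → ℕ
  | var _ => 0
  | con _ => 0
  | app P Q => P.callCost + Q.callCost + 4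

/-- Evaluates `P`, then runs the clock `Q`, and returns the value of `P`. -/
def andThen (P Q : Expr X) : Expr X := app (app (con .K) P) (app Q (con .I))

theorem eval_andThen (ρ : X → V) (P Q : Expr X) :
    eval ((P.andThen Q).subst ρ) = thinkN (do
      let v ← eval (P.subst ρ)
      let w ← eval (Q.subst ρ)
      let _ ← eval (ap w .I)
      pure v) 9 := by
  simp only [andThen, subst, eval_bull, eval_ret, ap_K, ap_K1, pure_bind, thinkN_bind, bind_thinkN,
    thinkN_thinkN, bind_assoc]

variable [DecidableEq X]

/-- The bracket abstraction `λ x. P`. -/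
def abs (x : X) : Expr X → Expr X
  | var y => if y = x then con .I else app (con .K) (var y)
  | con v => con (.K1 (.ret v))
  | app P Q => app (app (con .S) (P.abs x)) (Q.abs x)

/-- The value of `λ x. P` in an environment. -/
def closure (x : X) (ρ : X → V) : Expr X → V
  | var y => if y = x then .I else .K1 (.ret (ρ y))
  | con v => .K1 (.ret v)
  | app P Q => .S2 (.ret (P.closure x ρ)) (.ret (Q.closure x ρ))

/-- The number of steps in which `λ x. P` evaluates to its closure. -/
def absCost (x : X) : Expr X → ℕ
  | var y => if y = x then 0 else 3
  | con _ => 0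
  | app P Q => P.absCost x + Q.absCost x + 6

theorem eval_abs (x : X) (ρ : X → V) (P : Expr X) :
    eval ((P.abs x).subst ρ) = thinkN (pure (P.closure x ρ)) (P.absCost x) := by
  induction P with
  | var y =>
    by_cases h : y = x
    · simp only [abs, closure, absCost, h, if_true, subst, eval_ret, thinkN_zero]
    · simp only [abs, closure, absCost, h, if_false, subst, eval_bull, eval_ret, pure_bind, ap_K]
  | con v => exact eval_ret _
  | app P Q hP hQ =>
    simp only [abs, subst, eval_bull, eval_ret, hP, hQ, ap_S, ap_S1, pure_bind, thinkN_bind,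
      thinkN_thinkN, absCost, closure]
    congr 1
    omega

theorem eval_ap_closure (x : X) (ρ : X → V) (P : Expr X) (v : V) :
    eval (ap (P.closure x ρ) v) = thinkN (eval (P.subst (update ρ x v))) P.callCost := by
  induction P with
  | var y =>
    by_cases h : y = x <;> simp [closure, subst, h, ap, callCost, thinkN_zero]
  | con w => rfl
  | app P Q hP hQ =>
    simp only [closure, subst, callCost, ap_S2, eval_bull, eval_ltri, eval_ret, pure_bind, hP, hQ,
      thinkN_bind, bind_thinkN, thinkN_thinkN]
    congr 1
    omega

/-- The cost of applying a closure of `λ x. λ y. P` to its first argument. -/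
def lamCost (y : X) (P : Expr X) : ℕ := P.absCost y + (P.abs y).callCost

theorem eval_ap_closure_abs (x y : X) (ρ : X → V) (P : Expr X) (v : V) :
    eval (ap ((P.abs y).closure x ρ) v) =
      thinkN (pure (P.closure y (update ρ x v))) (P.lamCost y) := by
  rw [eval_ap_closure, eval_abs, thinkN_thinkN, lamCost]

end Expr

/-! ### Clocks and index adjustment -/

/-- A computation that takes `n` steps. -/
def delay : ℕ → C
  | 0 => .ret .I
  | n + 1 => .circ (.K1 (delay n)) .I

/-- A clock for `n` steps. -/
def clock (n : ℕ) : V := .K1 (delay n)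

/-- `σ` is a clock for `s` steps: a thunk whose forcing takes exactly `s` steps. -/
def IsClock (σ : V) (s : ℕ) : Prop := ∃ v, eval (ap σ .I) = thinkN (pure v) s

theorem eval_delay (n : ℕ) : eval (delay n) = thinkN (pure .I) n := by
  induction n with
  | zero => exact eval_ret _
  | succ n ih => simp only [delay, eval_circ, ap_K1, ih, thinkN_thinkN]

theorem isClock_clock (n : ℕ) : IsClock (clock n) n := ⟨.I, eval_delay n⟩

theorem isClock_I : IsClock .I 0 := ⟨.I, eval_ret _⟩

/-- The variables of `adjBody`. -/
inductive AdjVar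
  | self | overhead | σ | ρ | x | e
  deriving DecidableEq

/-- The expression `adj σ ρ x`, given an expression `a` for the combinator `adjuster`. -/
def Expr.adj {X : Type} (a σ ρ x : Expr X) : Expr X :=
  .app (.app (.app (.app a a) σ) ρ) x

/-- The body of the recursive program
`adj σ ρ x e = (let p := x (adj ρ σ e); run ρ; adj overhead I (adj σ I p))`. -/
def adjBody : Expr AdjVar :=
  .andThen
    (.adj (.var .self) (.var .overhead) (.con .I)
      (.adj (.var .self) (.var .σ) (.con .I)
        (.app (.var .x) (.adj (.var .self) (.var .ρ) (.var .σ) (.var .e)))))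
    (.var .ρ)

/-- The number of steps in which `Expr.adj` builds its value, once its arguments are evaluated. -/
def adjBuildCost : ℕ :=
  (((adjBody.abs .e).abs .x).abs .ρ).lamCost .σ + ((adjBody.abs .e).abs .x).lamCost .ρ +
    (adjBody.abs .e).lamCost .x + adjBody.lamCost .e + 12

/-- The number of steps of a call of `adj σ ρ x` that are spent neither in `x` nor in `ρ`. -/
def adjCost : ℕ := 3 * adjBuildCost + 12 + adjBody.callCost

/-- The environment of `adjuster`; only the value of `overhead` matters. -/
def adjEnv : AdjVar → V := fun _ => clock adjCost

/-- The combinator `λ self σ ρ x e. adjBody`, which yields `adj` when applied to itself. -/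
def adjuster : V := ((((adjBody.abs .e).abs .x).abs .ρ).abs .σ).closure .self adjEnv

/-- A copy of `x` at another index: `adj σ ρ x` behaves like `x`, but if `σ` and `ρ` are clocks for
`s` and `r` steps, its index in the relations `LogRel` exceeds that of `x` by `r - s`. -/
def adj (σ ρ x : V) : V :=
  adjBody.closure .e (update (update (update (update adjEnv .self adjuster) .σ σ) .ρ ρ) .x x)

theorem eval_adj {X : Type} {ρ : X → V} {a : Expr X} (ha : a.subst ρ = .ret adjuster)
    (P Q R : Expr X) :
    eval ((Expr.adj a P Q R).subst ρ) = thinkN (do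
      let σ ← eval (P.subst ρ)
      let τ ← eval (Q.subst ρ)
      let x ← eval (R.subst ρ)
      pure (adj σ τ x)) adjBuildCost := by
  have hself : eval (ap adjuster adjuster) = _ := Expr.eval_ap_closure_abs ..
  simp only [Expr.adj, Expr.subst, ha, eval_bull, eval_ret, pure_bind, hself, thinkN_bind,
    bind_thinkN, thinkN_thinkN, bind_assoc, Expr.eval_ap_closure_abs]
  refine congrArg (thinkN _) ?_
  simp only [adjBuildCost]
  omega

theorem eval_adj_con {X : Type} (ρ : X → V) (P Q R : Expr X) :
    eval ((Expr.adj (.con adjuster) P Q R).subst ρ) = thinkN (do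
      let σ ← eval (P.subst ρ)
      let τ ← eval (Q.subst ρ)
      let x ← eval (R.subst ρ)
      pure (adj σ τ x)) adjBuildCost :=
  eval_adj rfl P Q R

theorem eval_ap_adj {ρ : V} {r : ℕ} (hρ : IsClock ρ r) (σ x e : V) :
    eval (ap (adj σ ρ x) e) = thinkN (do
      let p ← eval (ap x (adj ρ σ e))
      pure (adj (clock adjCost) .I (adj σ .I p))) (r + adjCost) := by
  obtain ⟨w, hw⟩ := hρ
  rw [adj, Expr.eval_ap_closure]
  simp only [adjBody, Expr.eval_andThen, eval_adj, Expr.subst, eval_bull, eval_ret, hw, pure_bind,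
    thinkN_bind, bind_thinkN, thinkN_thinkN, bind_assoc, update_self, update_of_ne, ne_eq,
    reduceCtorEq, not_false_eq_true, adjEnv]
  refine congrArg (thinkN _) ?_
  simp only [adjCost, adjBody]
  omega

theorem logRel_adj {N N' s r : ℕ} {σ ρ x y : V} (hσ : IsClock σ s) (hρ : IsClock ρ r)
    (hN : N' + s = N + r) (h : LogRel N x y) : LogRel N' (adj σ ρ x) y := by
  induction hB : N + N' using Nat.strong_induction_on generalizing N N' s r σ ρ x y with
  | _ B ih =>
    subst hB
    cases N' with
    | zero => trivial
    | succ N' =>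
      refine logRel_succ_iff.2 fun u z huz => ?_
      rw [eval_ap_adj hρ]
      refine stepLift_thinkN_left fun m hm => ?_
      cases N with
      | zero => omega
      | succ N =>
        have harg : LogRel N (adj ρ σ u) z := ih _ (by omega) hρ hσ (by omega) huz rfl
        refine (logRel_succ_iff.1 h _ _ harg).bind_pure_left (by omega)
          fun p q j k l hpq hk hl => ?_
        have hp : LogRel (l + adjCost) (adj σ .I p) q :=
          ih _ (by omega) hσ isClock_I (by omega) hpq rfl
        exact ih _ (by omega) (isClock_clock _) isClock_I (by omega) hp rfl

theorem monoRel_adj {n s r : ℕ} {σ ρ x x' : V} (hσ : IsClock σ s) (hρ : IsClock ρ r)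
    (h : MonoRel n x x') :
    MonoRel n x (adj σ ρ x') := by
  induction n using Nat.strong_induction_on generalizing s r σ ρ x x' with
  | _ n ih =>
    refine monoRel_iff.2 fun m hm u z huz => ?_
    refine (h.ap hm (ih m hm hρ hσ huz)).comp
      (P := fun p p' => p' = adj (clock adjCost) .I (adj σ .I p)) (fun p hp => ?_) ?_
    · rw [eval_ap_adj hρ]
      exact ⟨_, (Computation.thinkN_mem _).2 (Computation.mem_bind hp (Computation.ret_mem _)), rfl⟩
    · rintro k p p' _ hk hpp' rfl
      exact ih k (by omega) (isClock_clock _) isClock_I (ih k (by omega) hσ isClock_I hpp')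

theorem leV_adj {s r : ℕ} {σ ρ : V} (hσ : IsClock σ s) (hρ : IsClock ρ r) (x : V) :
    LeV x (adj σ ρ x) := fun n => monoRel_adj hσ hρ (monoRel_refl n x)

/-! ### Slow copies of the combinators -/

/-- `v'` is a slow copy of `v`: it is above `v` in the preorder `LeV`, and slow enough to be below
`v` in all the relations `LogRel n`. -/
def IsSlowCopy (v' v : V) : Prop := (∀ n, LogRel n v' v) ∧ LeV v v'

/-- The variables of the programs for slow copies: arguments, and clocks that delay them. -/
inductive Var
  | p | q | c | x | δp | δq | δα | δβ | δr
  deriving DecidableEq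

/-- The body of `slowI = λ c. adj δr I c`. -/
def slowIBody : Expr Var := .adj (.con adjuster) (.var .δr) (.con .I) (.var .c)

/-- The running time of `slowI`. -/
def slowICost : ℕ := adjBuildCost + slowIBody.callCost

/-- A slow copy of `I`. -/
def slowI : V := slowIBody.closure .c fun _ => clock (slowICost + 1)

theorem eval_ap_slowI (u : V) :
    eval (ap slowI u) = thinkN (pure (adj (clock (slowICost + 1)) .I u)) slowICost := by
  rw [slowI, Expr.eval_ap_closure, slowICost]
  simp only [slowIBody, eval_adj_con, Expr.subst, eval_ret, pure_bind, thinkN_thinkN, update_self,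
    update_of_ne, ne_eq, reduceCtorEq, not_false_eq_true]

theorem isSlowCopy_slowI : IsSlowCopy slowI .I := by
  refine ⟨fun n => ?_, leV_ext fun u => ?_⟩
  · cases n with
    | zero => trivial
    | succ n =>
      refine logRel_succ_iff.2 fun u z huz => ?_
      rw [eval_ap_slowI, ap_I, eval_ret]
      exact stepLift_thinkN_left fun m hm => stepLift_pure fun k hk =>
        logRel_adj (isClock_clock _) isClock_I (by omega) huz
  · rw [eval_ap_slowI, ap_I, eval_ret]
    exact (leC_pure (leV_adj (isClock_clock _) isClock_I u)).thinkN_right _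

/-- The body of `slowK = λ p c. adj δr I p`. -/
def slowKBody : Expr Var := .adj (.con adjuster) (.var .δr) (.con .I) (.var .p)

/-- The running time of `slowK1 p`. -/
def slowK1Cost : ℕ := adjBuildCost + slowKBody.callCost

/-- The environment of `slowK`; only the value of `δr` matters. -/
def slowKEnv : Var → V := fun _ => clock (slowKBody.lamCost .c + slowK1Cost + 3)

/-- A slow copy of `K`. -/
def slowK : V := (slowKBody.abs .c).closure .p slowKEnv

/-- The value of `slowK` at `p`, a slow copy of `K1 [p]`. -/
def slowK1 (p : V) : V := slowKBody.closure .c (update slowKEnv .p p)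

theorem eval_ap_slowK (p : V) :
    eval (ap slowK p) = thinkN (pure (slowK1 p)) (slowKBody.lamCost .c) :=
  Expr.eval_ap_closure_abs ..

theorem eval_ap_slowK1 (p c : V) :
    eval (ap (slowK1 p) c) =
      thinkN (pure (adj (clock (slowKBody.lamCost .c + slowK1Cost + 3)) .I p)) slowK1Cost := by
  rw [slowK1, Expr.eval_ap_closure, slowK1Cost]
  simp only [slowKBody, eval_adj_con, Expr.subst, eval_ret, pure_bind, thinkN_thinkN, update_self,
    update_of_ne, ne_eq, reduceCtorEq, not_false_eq_true, slowKEnv, slowK1Cost]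

theorem isSlowCopy_slowK : IsSlowCopy slowK .K := by
  refine ⟨fun n => ?_, leV_ext fun p => ?_⟩
  · cases n with
    | zero => trivial
    | succ n =>
      refine logRel_succ_iff.2 fun p p' hp => ?_
      rw [eval_ap_slowK, ap_K, eval_ret]
      refine stepLift_thinkN_left fun m hm => stepLift_pure fun k hk => ?_
      cases k with
      | zero => trivial
      | succ k =>
        refine logRel_succ_iff.2 fun c c' _ => ?_
        rw [eval_ap_slowK1, ap_K1, eval_ret]
        exact stepLift_thinkN_left fun m' hm' => stepLift_pure fun l hl =>
          logRel_adj (isClock_clock _) isClock_I (by omega) hp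
  · rw [eval_ap_slowK, ap_K, eval_ret]
    refine (leC_pure (leV_ext fun c => ?_)).thinkN_right _
    rw [eval_ap_slowK1, ap_K1, eval_ret]
    exact (leC_pure (leV_adj (isClock_clock _) isClock_I p)).thinkN_right _

/-- The application `p (adj I δp c)`. -/
def slowSFun : Expr Var :=
  .app (.var .p) (.adj (.con adjuster) (.con .I) (.var .δp) (.var .c))

/-- The application `q (adj I δq c)`. -/
def slowSArg : Expr Var :=
  .app (.var .q) (.adj (.con adjuster) (.con .I) (.var .δq) (.var .c))

/-- The body of the clock `λ x. α` that measures the running time of `slowSFun`. -/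
def funClockBody : Expr Var := slowSFun.andThen (.var .δα)

/-- The body of the clock `λ x. β` that measures the running time of `slowSArg`. -/
def argClockBody : Expr Var := slowSArg.andThen (.var .δβ)

/-- The body of
`slowS = λ p q c. adj (λ x. β) δr (p (adj I δp c) (adj (λ x. α) (λ x. β) (q (adj I δq c))))`.
The index at which the results of the two inner applications are related depends on their running
times, which the clocks `λ x. α` and `λ x. β` make up for by running these applications again. -/
def slowSBody : Expr Var :=
  .adj (.con adjuster) (argClockBody.abs .x) (.var .δr)
    (.app slowSFun
      (.adj (.con adjuster) (funClockBody.abs .x) (argClockBody.abs .x) slowSArg))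

/-- The running time of `slowS`. -/
def slowSCost : ℕ := (slowSBody.abs .c).lamCost .q

/-- The running time of `slowS1 p`. -/
def slowS1Cost : ℕ := slowSBody.lamCost .c

/-- The overhead of a call of `slowS2 p q`. -/
def slowS2Cost : ℕ :=
  4 * adjBuildCost + funClockBody.absCost .x + 2 * argClockBody.absCost .x + 9 + slowSBody.callCost

/-- The overhead of running `funClock`, apart from `δα`. -/
def funClockCost : ℕ := adjBuildCost + 12 + funClockBody.callCost

/-- The overhead of running `argClock`, apart from `δβ`. -/
def argClockCost : ℕ := adjBuildCost + 12 + argClockBody.callCost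

/-- The environment of `slowS`. The clocks are the solution of the linear equations under which
`logRel_slowS2` holds. -/
def slowSEnv : Var → V
  | .δp => clock (slowSCost + slowS1Cost + 3)
  | .δq => clock (slowS1Cost + 1)
  | .δα => clock (slowS1Cost + slowS2Cost + argClockCost)
  | .δβ => clock (slowSCost + slowS1Cost + slowS2Cost + funClockCost + 1)
  | .δr => clock (funClockCost + argClockCost)
  | _ => .I

/-- A slow copy of `S`. -/
def slowS : V := ((slowSBody.abs .c).abs .q).closure .p slowSEnv

/-- The value of `slowS` at `p`, a slow copy of `S1 [p]`. -/
def slowS1 (p : V) : V := (slowSBody.abs .c).closure .q (update slowSEnv .p p)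

/-- The value of `slowS1 p` at `q`, a slow copy of `S2 [p] [q]`. -/
def slowS2 (p q : V) : V := slowSBody.closure .c (update (update slowSEnv .p p) .q q)

/-- The value of `λ x. α` in a call of `slowS2 p q` at `c`. -/
def funClock (p q c : V) : V :=
  funClockBody.closure .x (update (update (update slowSEnv .p p) .q q) .c c)

/-- The value of `λ x. β` in a call of `slowS2 p q` at `c`. -/
def argClock (p q c : V) : V :=
  argClockBody.closure .x (update (update (update slowSEnv .p p) .q q) .c c)

theorem eval_ap_slowS (p : V) : eval (ap slowS p) = thinkN (pure (slowS1 p)) slowSCost :=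
  Expr.eval_ap_closure_abs ..

theorem eval_ap_slowS1 (p q : V) :
    eval (ap (slowS1 p) q) = thinkN (pure (slowS2 p q)) slowS1Cost :=
  Expr.eval_ap_closure_abs ..

theorem eval_subst_slowSFun (ρ : Var → V) :
    eval (slowSFun.subst ρ) = thinkN (eval (ap (ρ .p) (adj .I (ρ .δp) (ρ .c))))
      (adjBuildCost + 3) := by
  simp only [slowSFun, Expr.subst, eval_bull, eval_adj_con, eval_ret, pure_bind, thinkN_bind,
    thinkN_thinkN]

theorem eval_subst_slowSArg (ρ : Var → V) :
    eval (slowSArg.subst ρ) = thinkN (eval (ap (ρ .q) (adj .I (ρ .δq) (ρ .c))))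
      (adjBuildCost + 3) := by
  simp only [slowSArg, Expr.subst, eval_bull, eval_adj_con, eval_ret, pure_bind, thinkN_bind,
    thinkN_thinkN]

theorem eval_ap_slowS2 (p q c : V) :
    eval (ap (slowS2 p q) c) = thinkN (do
      let g ← eval (ap p (adj .I (clock (slowSCost + slowS1Cost + 3)) c))
      let h ← eval (ap q (adj .I (clock (slowS1Cost + 1)) c))
      let r ← eval (ap g (adj (funClock p q c) (argClock p q c) h))
      pure (adj (argClock p q c) (clock (funClockCost + argClockCost)) r)) slowS2Cost := by
  rw [slowS2, Expr.eval_ap_closure]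
  simp only [slowSBody, eval_adj_con, Expr.subst, eval_bull, Expr.eval_abs, eval_subst_slowSFun,
    eval_subst_slowSArg, eval_ret, pure_bind, bind_assoc, thinkN_bind, bind_thinkN, thinkN_thinkN,
    update_self, update_of_ne, ne_eq, reduceCtorEq, not_false_eq_true, slowSEnv]
  refine congrArg (thinkN _) ?_
  simp only [slowS2Cost, slowSBody]
  omega

theorem isClock_funClock {p q c g : V} {j : ℕ}
    (hg : Results (eval (ap p (adj .I (clock (slowSCost + slowS1Cost + 3)) c))) g j) :
    IsClock (funClock p q c) (j + funClockCost + (slowS1Cost + slowS2Cost + argClockCost)) := by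
  refine ⟨g, ?_⟩
  have hg' : eval (ap p _) = thinkN (pure g) j := Computation.eq_thinkN hg
  obtain ⟨w, hw⟩ := isClock_clock (slowS1Cost + slowS2Cost + argClockCost)
  rw [funClock, Expr.eval_ap_closure]
  simp only [funClockBody, Expr.eval_andThen, eval_subst_slowSFun, Expr.subst, eval_ret, pure_bind,
    thinkN_bind, thinkN_thinkN, update_self, update_of_ne, ne_eq, reduceCtorEq, not_false_eq_true,
    slowSEnv, hg', hw]
  refine congrArg (thinkN _) ?_
  simp only [funClockCost, funClockBody]
  omega

theorem isClock_argClock {p q c h : V} {j : ℕ}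
    (hh : Results (eval (ap q (adj .I (clock (slowS1Cost + 1)) c))) h j) :
    IsClock (argClock p q c)
      (j + argClockCost + (slowSCost + slowS1Cost + slowS2Cost + funClockCost + 1)) := by
  refine ⟨h, ?_⟩
  have hh' : eval (ap q _) = thinkN (pure h) j := Computation.eq_thinkN hh
  obtain ⟨w, hw⟩ := isClock_clock (slowSCost + slowS1Cost + slowS2Cost + funClockCost + 1)
  rw [argClock, Expr.eval_ap_closure]
  simp only [argClockBody, Expr.eval_andThen, eval_subst_slowSArg, Expr.subst, eval_ret, pure_bind,
    thinkN_bind, thinkN_thinkN, update_self, update_of_ne, ne_eq, reduceCtorEq, not_false_eq_true,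
    slowSEnv, hh', hw]
  refine congrArg (thinkN _) ?_
  simp only [argClockCost, argClockBody]
  omega

theorem eval_ap_S2_ret (p q c : V) :
    eval (ap (.S2 (.ret p) (.ret q)) c) = thinkN (do
      let g ← eval (ap p c)
      let h ← eval (ap q c)
      eval (ap g h)) 7 := by
  simp only [ap_S2, eval_bull, eval_ltri, eval_ret, pure_bind, thinkN_bind, bind_thinkN,
    thinkN_thinkN]

theorem logRel_slowS2 {n : ℕ} {p q p' q' : V} (hp : LogRel (n + slowSCost + slowS1Cost + 4) p p')
    (hq : LogRel (n + slowS1Cost + 2) q q') :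
    LogRel (n + 1) (slowS2 p q) (.S2 (.ret p') (.ret q')) := by
  refine logRel_succ_iff.2 fun c c' hc => ?_
  rw [eval_ap_slowS2, eval_ap_S2_ret]
  refine stepLift_thinkN fun m hm => ?_
  have harg {σ : V} {s N : ℕ} (hσ : IsClock σ s) (hN : N = n + s) : LogRel N (adj .I σ c) c' :=
    logRel_adj isClock_I hσ (by omega) hc
  refine (logRel_succ_iff.1 hp _ c' (harg (isClock_clock _) (by omega))).bind (by omega)
    fun g g' i k m₁ hg _ hgg' hk hm₁ => ?_
  refine (logRel_succ_iff.1 hq _ c' (harg (isClock_clock _) (by omega))).bind (by omega)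
    fun h h' j l m₂ hh _ hhh' hl hm₂ => ?_
  have hα := isClock_funClock (q := q) hg
  have hβ := isClock_argClock (p := p) hh
  cases k with
  | zero => exact absurd hk (by omega)
  | succ k =>
    have hh_adj : LogRel k (adj (funClock p q c) (argClock p q c) h) h' :=
      logRel_adj hα hβ (by omega) hhh'
    exact (logRel_succ_iff.1 hgg' _ h' hh_adj).bind_pure_left (by omega)
      fun r r' i' k' l' hr hk' hl' => logRel_adj hβ (isClock_clock _) (by omega) hr

theorem logRel_slowS (n : ℕ) : LogRel n slowS .S := by
  cases n with
  | zero => trivial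
  | succ n =>
    refine logRel_succ_iff.2 fun p p' hp => ?_
    rw [eval_ap_slowS, ap_S, eval_ret]
    refine stepLift_thinkN_left fun m hm => stepLift_pure fun k hk => ?_
    cases k with
    | zero => trivial
    | succ k =>
      refine logRel_succ_iff.2 fun q q' hq => ?_
      rw [eval_ap_slowS1, ap_S1, eval_ret]
      refine stepLift_thinkN_left fun m' hm' => stepLift_pure fun l hl => ?_
      cases l with
      | zero => trivial
      | succ l =>
        obtain rfl : n = l + slowSCost + slowS1Cost + 4 := by omega
        obtain rfl : k = l + slowS1Cost + 2 := by omega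
        exact logRel_slowS2 hp hq

theorem leV_slowS2 (p q : V) : LeV (.S2 (.ret p) (.ret q)) (slowS2 p q) := by
  refine leV_ext fun c => ?_
  have hadj {σ : V} {s : ℕ} (hσ : IsClock σ s) : LeV c (adj .I σ c) := leV_adj isClock_I hσ c
  rw [eval_ap_S2_ret, eval_ap_slowS2, leC_thinkN]
  refine ((LeV.refl p).ap (hadj (isClock_clock _))).bind fun g g' _ hg hgg' => ?_
  refine ((LeV.refl q).ap (hadj (isClock_clock _))).bind fun h h' _ hh hhh' => ?_
  obtain ⟨i, hi⟩ := Computation.exists_results_of_mem hg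
  obtain ⟨j, hj⟩ := Computation.exists_results_of_mem hh
  have hα := isClock_funClock (q := q) hi
  have hβ := isClock_argClock (p := p) hj
  rw [← bind_pure (eval (ap g h))]
  exact (hgg'.ap (hhh'.trans (leV_adj hα hβ h'))).bind fun r r' _ _ hrr' =>
    leC_pure (hrr'.trans (leV_adj hβ (isClock_clock _) r'))

theorem leV_slowS : LeV .S slowS := by
  refine leV_ext fun p => ?_
  rw [eval_ap_slowS, ap_S, eval_ret]
  refine (leC_pure (leV_ext fun q => ?_)).thinkN_right _
  rw [eval_ap_slowS1, ap_S1, eval_ret]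
  exact (leC_pure (leV_slowS2 p q)).thinkN_right _

theorem isSlowCopy_slowS : IsSlowCopy slowS .S := ⟨logRel_slowS, leV_slowS⟩

/-! ### Slow copies of all values -/

/-- The values that have a slow copy. -/
def HasSlowCopy (v : V) : Prop := ∃ v', IsSlowCopy v' v

/-- The computations whose value, if any, has a slow copy. -/
def ResultHasSlowCopy (t : C) : Prop := ∀ v ∈ eval t, HasSlowCopy v

section

variable {v w u r p q : V} {t s : C}

theorem HasSlowCopy.congr (h : HasSlowCopy v) (hvw : LeV v w) (hwv : LeV w v) : HasSlowCopy w :=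
  h.imp fun _ h' => ⟨fun n => LogRel.trans_leV (h'.1 n) hvw, hwv.trans h'.2⟩

theorem HasSlowCopy.of_mem_ap (hv : HasSlowCopy v) (hu : HasSlowCopy u)
    (hr : r ∈ eval (ap v u)) : HasSlowCopy r := by
  obtain ⟨v', hLv, hv'⟩ := hv
  obtain ⟨u', hLu, hu'⟩ := hu
  obtain ⟨r', hr', hrr'⟩ := hv'.ap hu' r hr
  obtain ⟨r'', hr'', hLr⟩ := logRel_forall_ap hLv hLu r' hr'
  exact ⟨r', Computation.mem_unique hr'' hr ▸ hLr, hrr'⟩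

theorem HasSlowCopy.of_ap_eq_ret (hv : HasSlowCopy v) (hu : HasSlowCopy u) (h : ap v u = .ret r) :
    HasSlowCopy r :=
  hv.of_mem_ap hu (by rw [h, eval_ret]; exact Computation.ret_mem r)

theorem hasSlowCopy_I : HasSlowCopy .I := ⟨_, isSlowCopy_slowI⟩

theorem hasSlowCopy_K : HasSlowCopy .K := ⟨_, isSlowCopy_slowK⟩

theorem hasSlowCopy_S : HasSlowCopy .S := ⟨_, isSlowCopy_slowS⟩

theorem HasSlowCopy.S1_ret (hp : HasSlowCopy p) : HasSlowCopy (.S1 (.ret p)) :=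
  hasSlowCopy_S.of_ap_eq_ret hp (ap_S p)

theorem leC_ret_of_mem (hp : p ∈ eval t) : LeC (eval t) (eval (.ret p)) := fun v hv => by
  rw [eval_ret, Computation.mem_unique hv hp]
  exact ⟨p, Computation.ret_mem p, .refl p⟩

theorem leC_of_mem (hp : p ∈ eval t) : LeC (eval (.ret p)) (eval t) := fun v hv => by
  rw [eval_ret] at hv
  exact ⟨p, hp, Computation.eq_of_pure_mem hv ▸ .refl p⟩

theorem logRel_of_ap_diverges {n : ℕ} (hv : ∀ u r, r ∉ eval (ap v u)) : LogRel n v w := by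
  cases n with
  | zero => trivial
  | succ n => exact logRel_succ_iff.2 fun u _ _ r _ hr => absurd hr.mem (hv u r)

theorem exists_mem_of_mem_ap_S2 (h : r ∈ eval (ap (.S2 t s) u)) :
    (∃ p, p ∈ eval t) ∧ ∃ q, q ∈ eval s := by
  rw [ap_S2, eval_bull, eval_ltri, eval_ltri, Computation.thinkN_mem] at h
  obtain ⟨g, hg, h⟩ := Computation.exists_of_mem_bind h
  obtain ⟨a, ha, -⟩ := Computation.exists_of_mem_bind h
  obtain ⟨p, hp, -⟩ := Computation.exists_of_mem_bind ((Computation.thinkN_mem 2).1 hg)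
  obtain ⟨q, hq, -⟩ := Computation.exists_of_mem_bind ((Computation.thinkN_mem 2).1 ha)
  exact ⟨⟨p, hp⟩, q, hq⟩

theorem hasSlowCopy_K1 (ht : ResultHasSlowCopy t) : HasSlowCopy (.K1 t) := by
  obtain ⟨-, -, -, congr_K1, -⟩ := isCong_leV_leC
  by_cases h : ∃ p, p ∈ eval t
  · obtain ⟨p, hp⟩ := h
    exact (hasSlowCopy_K.of_ap_eq_ret (ht p hp) (ap_K p)).congr
      (congr_K1 _ _ (leC_of_mem hp)) (congr_K1 _ _ (leC_ret_of_mem hp))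
  · exact ⟨.K1 t, fun _ => logRel_of_ap_diverges fun _ r hr => h ⟨r, hr⟩, .refl _⟩

theorem hasSlowCopy_S1 (ht : ResultHasSlowCopy t) : HasSlowCopy (.S1 t) := by
  obtain ⟨-, -, -, -, congr_S1, -⟩ := isCong_leV_leC
  by_cases h : ∃ p, p ∈ eval t
  · obtain ⟨p, hp⟩ := h
    exact (ht p hp).S1_ret.congr (congr_S1 _ _ (leC_of_mem hp)) (congr_S1 _ _ (leC_ret_of_mem hp))
  · refine ⟨.S1 t, fun n => ?_, .refl _⟩
    cases n with
    | zero => trivial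
    | succ n =>
      refine logRel_succ_iff.2 fun u z _ => ?_
      rw [ap_S1, ap_S1, eval_ret, eval_ret]
      exact stepLift_pure fun _ _ =>
        logRel_of_ap_diverges fun _ _ hr => h (exists_mem_of_mem_ap_S2 hr).1

theorem hasSlowCopy_S2 (ht : ResultHasSlowCopy t) (hs : ResultHasSlowCopy s) :
    HasSlowCopy (.S2 t s) := by
  obtain ⟨-, -, -, -, -, congr_S2, -⟩ := isCong_leV_leC
  by_cases h : (∃ p, p ∈ eval t) ∧ ∃ q, q ∈ eval s
  · obtain ⟨⟨p, hp⟩, q, hq⟩ := h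
    exact ((ht p hp).S1_ret.of_ap_eq_ret (hs q hq) (ap_S1 _ q)).congr
      (congr_S2 _ _ _ _ (leC_of_mem hp) (leC_of_mem hq))
      (congr_S2 _ _ _ _ (leC_ret_of_mem hp) (leC_ret_of_mem hq))
  · exact ⟨_, fun _ => logRel_of_ap_diverges fun _ _ hr => h (exists_mem_of_mem_ap_S2 hr), .refl _⟩

theorem resultHasSlowCopy_ret (hv : HasSlowCopy v) : ResultHasSlowCopy (.ret v) := by
  intro r hr
  rw [eval_ret] at hr
  exact Computation.eq_of_pure_mem hr ▸ hv

theorem resultHasSlowCopy_circ (hv : HasSlowCopy v) (hw : HasSlowCopy w) :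
    ResultHasSlowCopy (.circ v w) := by
  intro r hr
  rw [eval_circ, Computation.thinkN_mem] at hr
  exact hv.of_mem_ap hw hr

theorem resultHasSlowCopy_rtri (hv : HasSlowCopy v) (hs : ResultHasSlowCopy s) :
    ResultHasSlowCopy (.rtri v s) := by
  intro r hr
  rw [eval_rtri, Computation.thinkN_mem] at hr
  obtain ⟨w, hw, hr⟩ := Computation.exists_of_mem_bind hr
  exact hv.of_mem_ap (hs w hw) hr

theorem resultHasSlowCopy_ltri (ht : ResultHasSlowCopy t) (hw : HasSlowCopy w) :
    ResultHasSlowCopy (.ltri t w) := by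
  intro r hr
  rw [eval_ltri, Computation.thinkN_mem] at hr
  obtain ⟨v, hv, hr⟩ := Computation.exists_of_mem_bind hr
  exact (ht v hv).of_mem_ap hw hr

theorem resultHasSlowCopy_bull (ht : ResultHasSlowCopy t) (hs : ResultHasSlowCopy s) :
    ResultHasSlowCopy (.bull t s) := by
  intro r hr
  rw [eval_bull, Computation.thinkN_mem] at hr
  obtain ⟨v, hv, hr⟩ := Computation.exists_of_mem_bind hr
  obtain ⟨w, hw, hr⟩ := Computation.exists_of_mem_bind hr
  exact (ht v hv).of_mem_ap (hs w hw) hr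

end

mutual

theorem hasSlowCopy : ∀ v : V, HasSlowCopy v
  | .I => hasSlowCopy_I
  | .K => hasSlowCopy_K
  | .S => hasSlowCopy_S
  | .K1 t => hasSlowCopy_K1 (resultHasSlowCopy t)
  | .S1 t => hasSlowCopy_S1 (resultHasSlowCopy t)
  | .S2 t s => hasSlowCopy_S2 (resultHasSlowCopy t) (resultHasSlowCopy s)

theorem resultHasSlowCopy : ∀ t : C, ResultHasSlowCopy t
  | .ret v => resultHasSlowCopy_ret (hasSlowCopy v)
  | .bull t s => resultHasSlowCopy_bull (resultHasSlowCopy t) (resultHasSlowCopy s)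
  | .rtri v s => resultHasSlowCopy_rtri (hasSlowCopy v) (resultHasSlowCopy s)
  | .ltri t w => resultHasSlowCopy_ltri (resultHasSlowCopy t) (hasSlowCopy w)
  | .circ v w => resultHasSlowCopy_circ (hasSlowCopy v) (hasSlowCopy w)

end

theorem MonoRel.trans_logRel {n : ℕ} {a b c : V} (hab : MonoRel n a b)
    (hbc : ∀ k, LogRel k b c) : MonoRel n a c := by
  induction n using Nat.strong_induction_on generalizing a b c with
  | _ n ih =>
    refine monoRel_iff.2 fun m hm u z huz => ?_
    obtain ⟨z', hLz, hz⟩ := hasSlowCopy z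
    exact (hab.ap hm (huz.trans_leV hz)).comp (logRel_forall_ap hbc hLz)
      fun k _ _ _ hk => ih k (by omega)

theorem leV_of_forall_logRel {v w : V} (h : ∀ n, LogRel n v w) : LeV v w := fun n =>
  (monoRel_refl n v).trans_logRel h

theorem leC_of_lC {t s : C} (h : LC t s) : LeC (eval t) (eval s) := fun v hv =>
  (stepLift_forall_iff.1 (fun n => lrelN_comp_iff.1 (h n)) v hv).imp fun _ hw =>
    ⟨hw.1, leV_of_forall_logRel hw.2⟩

end FG

open FG in
/-- The step-indexed logical relation for xCL_fg is sound for the contextual preorder. -/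
theorem fg_logRel_sound :
    (∀ v w : V, LV v w → CtxLeV v w) ∧
    (∀ t s : C, LC t s → CtxLeC t s) :=
  ⟨fun _ _ h => (leV_of_forall_logRel h).ctxLeV, fun _ _ h => (leC_of_lC h).ctxLeC⟩
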